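/- Let P be a 1-Sing graded poset of rank d+1. Then for all i > ⌊d/2⌋: ĥ_{d-i}(P) - ĥ_i(P) = (-1)^{d-i+1} [ binom(d,i)·e_P(0̂,1̂) + binom(d,i)·∑_{ρ(t)=d} e_P(0̂,t) + binom(d-1,i-1)·∑_{ρ(s)=1} e_P(s,1̂) ]. -/

import Mathlib

open Finset Polynomial

variable {α : Type*} [Fintype α] [PartialOrder α] [BoundedOrder α] [DecidableEq α]
  [DecidableRel ((· ≤ ·) : α → α → Prop)] [DecidableRel ((· < ·) : α → α → Prop)]

/-- `ρ` is a rank function making `α` a graded poset of rank `d + 1`. -/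
def IsGraded (ρ : α → ℕ) (d : ℕ) : Prop :=
  ρ ⊥ = 0 ∧ ρ ⊤ = d + 1 ∧ (∀ a b : α, a ⋖ b → ρ b = ρ a + 1) ∧
    ∀ a b : α, a < b → ρ a < ρ b

/-- `mu` is the Möbius function of the poset `α`. -/
def IsMobius (mu : α → α → ℤ) : Prop :=
  (∀ a : α, mu a a = 1) ∧
    ∀ a b : α, a < b → ∑ c ∈ Finset.univ.filter (fun c => a ≤ c ∧ c ≤ b), mu a c = 0

/-- `hh q` and `g q` are the toric polynomials `ĥ([0̂,q], x)` and `ĝ([0̂,q], x)` of the lower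
intervals, defined by Stanley's recursion.  Writing `ĥ([0̂,q],x) = ĥ_r + ĥ_{r-1} x + ⋯ + ĥ_0 x^r`
with `r = ρ(q) - 1`, the polynomial `ĝ` has coefficients `ĝ_k = ĥ_{r-k} - ĥ_{r-k+1}` for
`k ≤ ⌊r/2⌋` and `0` above. -/
def ToricPair (ρ : α → ℕ) (hh g : α → Polynomial ℤ) : Prop :=
  hh ⊥ = 1 ∧ g ⊥ = 1 ∧
  (∀ q : α, q ≠ ⊥ →
    hh q = ∑ p ∈ Finset.univ.filter (· < q), g p * (X - 1) ^ (ρ q - 1 - ρ p)) ∧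
  (∀ q : α, q ≠ ⊥ →
    (g q).coeff 0 = (hh q).coeff 0 ∧
    (∀ k, 1 ≤ k → k ≤ (ρ q - 1) / 2 → (g q).coeff k = (hh q).coeff k - (hh q).coeff (k - 1)) ∧
    (∀ k, (ρ q - 1) / 2 < k → (g q).coeff k = 0))

/-!
Write `H` for `ĥ(P, x)`, so that `H = ∑_{p < 1̂} g_p (X - 1)^(d - ρ p)`. Reversing the coefficients
of `H` replaces each `g_p` by its reversal, and wherever the lower interval of `p` is Eulerian that
reversal equals `∑_{r ≤ p} g_r (X - 1)^(ρ p - ρ r)`. Interchanging the two sums then writes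
`reverse H - H` through two kinds of corrections: the failures of this duality at the `p < 1̂`, and
the alternating rank counts of the intervals `[r, 1̂]`, which are sums of interval errors
because `∑_{r ≤ c ≤ 1̂} μ(c, 1̂) = 0`.

For a `1`-Sing poset only `0̂` and the elements of rank `1` contribute alternating rank counts, and
only the elements `t` of rank `d` contribute a failure of duality. The same formula applied to
`[0̂, t]` shows that, in degrees above `d / 2`, this failure is `e(0̂, t) (X - 1)^d`. Altogether
`reverse H - H` agrees in these degrees with
`(e(0̂, 1̂) + ∑_t e(0̂, t)) (X - 1)^d + (∑_s e(s, 1̂)) X (X - 1)^(d - 1)`.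
-/

section Reflection

variable {R : Type*} [CommRing R]

lemma reflect_finsetSum {ι : Type*} (N : ℕ) (s : Finset ι) (f : ι → R[X]) :
    reflect N (∑ j ∈ s, f j) = ∑ j ∈ s, reflect N (f j) := by
  ext k
  simp only [coeff_reflect, finsetSum_coeff]

lemma natDegree_X_sub_one_pow_le (n : ℕ) : ((X - 1 : R[X]) ^ n).natDegree ≤ n := by
  compute_degree

lemma reflect_X_sub_one_pow (n : ℕ) : reflect n ((X - 1 : R[X]) ^ n) = (1 - X) ^ n := by
  induction n with
  | zero => simp
  | succ n ih =>
    rw [pow_succ, reflect_mul _ _ (natDegree_X_sub_one_pow_le n) (by compute_degree), ih, pow_succ]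
    simp [reflect_sub]

lemma reflect_succ_one_sub_X_mul {n : ℕ} {h : R[X]} (hn : h.natDegree ≤ n) :
    reflect (n + 1) ((1 - X) * h) = (X - 1) * reflect n h := by
  rw [add_comm n, reflect_mul _ _ (by compute_degree) hn]
  simp [reflect_sub]

lemma coeff_X_sub_one_pow (n k : ℕ) :
    ((X - 1 : R[X]) ^ n).coeff k = (-1) ^ (n - k) * n.choose k := by
  simpa [sub_eq_add_neg] using coeff_X_add_C_pow (-1 : R) n k

/-- Stanley's truncation `ĥ ↦ ĝ` for a polynomial `h` of degree at most `n`: the part of `(1 - X) h`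
in degrees at most `n / 2`. -/
noncomputable def toricTrunc (n : ℕ) (h : R[X]) : R[X] :=
  ∑ k ∈ range (n / 2 + 1), monomial k (((1 - X) * h).coeff k)

lemma coeff_toricTrunc (n : ℕ) (h : R[X]) (k : ℕ) :
    (toricTrunc n h).coeff k = if 2 * k ≤ n then ((1 - X) * h).coeff k else 0 := by
  have hk : k < n / 2 + 1 ↔ 2 * k ≤ n := by omega
  simp only [toricTrunc, finsetSum_coeff, coeff_monomial, sum_ite_eq', Finset.mem_range, hk]

lemma natDegree_toricTrunc_le (n : ℕ) (h : R[X]) : (toricTrunc n h).natDegree ≤ n := by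
  refine natDegree_le_iff_coeff_eq_zero.mpr fun k hk ↦ ?_
  rw [coeff_toricTrunc, if_neg (by omega)]

lemma coeff_reflect_toricTrunc_of_lt {n i : ℕ} {h : R[X]} (hn : h.natDegree ≤ n)
    (hi : n + 1 < 2 * i) :
    (reflect (n + 1) (toricTrunc n h)).coeff i = ((X - 1) * reflect n h).coeff i := by
  rw [← reflect_succ_one_sub_X_mul hn, coeff_reflect, coeff_reflect, coeff_toricTrunc]
  rcases le_or_gt i (n + 1) with hin | hin
  · rw [revAt_le hin, if_pos (by omega)]
  · have hdeg : ((1 - X) * h).natDegree ≤ 1 + n :=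
      natDegree_mul_le_of_le (by compute_degree) hn
    rw [revAt_eq_self_of_lt hin, if_neg (by omega), coeff_eq_zero_of_natDegree_lt (by omega)]

lemma coeff_middle_one_sub_X_mul_eq_zero {m : ℕ} {h : R[X]} (hh : reflect (2 * m + 1) h = h) :
    ((1 - X) * h).coeff (m + 1) = 0 := by
  have hm : h.coeff (m + 1) = h.coeff m := by
    conv_lhs => rw [← hh, coeff_reflect, revAt_le (by omega)]
    congr 1
    omega
  rw [sub_mul, one_mul, coeff_sub, coeff_X_mul, hm, sub_self]

lemma reflect_toricTrunc_of_reflect_eq {n : ℕ} {h : R[X]} (hn : h.natDegree ≤ n)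
    (hh : reflect n h = h) :
    reflect (n + 1) (toricTrunc n h) = (X - 1) * h + toricTrunc n h := by
  ext i
  rcases lt_or_ge (n + 1) (2 * i) with hi | hi
  · rw [coeff_reflect_toricTrunc_of_lt hn hi, hh, coeff_add, coeff_toricTrunc, if_neg (by omega),
      add_zero]
  · have hK : ((X - 1) * h).coeff i = -((1 - X) * h).coeff i := by
      rw [← coeff_neg, ← neg_mul, neg_sub]
    rw [coeff_reflect, revAt_le (by omega), coeff_toricTrunc, if_neg (by omega), coeff_add, hK,
      coeff_toricTrunc]
    split_ifs with hin
    · rw [neg_add_cancel]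
    · obtain ⟨m, rfl⟩ : ∃ m, i = m + 1 := ⟨i - 1, by omega⟩
      obtain rfl : n = 2 * m + 1 := by omega
      rw [coeff_middle_one_sub_X_mul_eq_zero hh, neg_zero, zero_add]

end Reflection

lemma sum_eq_add_sum_of_subset {ι M : Type*} [AddCommMonoid M] {s t : Finset ι} {a : ι}
    {f : ι → M} (ha : a ∈ s) (hts : t ⊆ s) (hat : a ∉ t)
    (h : ∀ x ∈ s, x ≠ a → x ∉ t → f x = 0) : ∑ x ∈ s, f x = f a + ∑ x ∈ t, f x := by
  classical
  rw [← sum_insert hat]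
  refine (sum_subset (insert_subset ha hts) fun x hx hxt ↦ ?_).symm
  rw [Finset.mem_insert, not_or] at hxt
  exact h x hx hxt.1 hxt.2

section EulerSum

variable {P : Type*} [PartialOrder P] [LocallyFiniteOrder P] {ρ : P → ℕ}

/-- The alternating rank count of the interval `[s, t]`, signed so that `t` counts `+1`. An interval
is Eulerian iff this vanishes on all its subintervals `[s, t]` with `s < t`. -/
def eulerSum (ρ : P → ℕ) (s t : P) : ℤ :=
  ∑ c ∈ Icc s t, (-1) ^ (ρ c + ρ t)

lemma sum_Ico_neg_one_pow (hρ : StrictMono ρ) {s t : P} (hst : s ≤ t) :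
    ∑ c ∈ Ico s t, (-1 : ℤ) ^ (ρ t - 1 - ρ c) = 1 - eulerSum ρ s t := by
  classical
  have hsign : ∀ c ∈ Ico s t, (-1 : ℤ) ^ (ρ t - 1 - ρ c) = -(-1) ^ (ρ c + ρ t) := by
    intro c hc
    have hct := hρ (mem_Ico.mp hc).2
    rw [← neg_one_mul ((-1 : ℤ) ^ _), ← pow_succ']
    exact neg_one_pow_congr (by grind)
  rw [sum_congr rfl hsign, sum_neg_distrib, eulerSum, ← Ico_insert_right hst,
    sum_insert right_notMem_Ico, Even.neg_one_pow ⟨ρ t, rfl⟩]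
  ring

variable [DecidableEq P]

/-- The interval error `e(s, t) = μ(s, t) - (-1)^(ρ t - ρ s)`, with the sign written without
truncated subtraction. -/
def intervalError (ρ : P → ℕ) (s t : P) : ℤ :=
  IncidenceAlgebra.mu ℤ s t - (-1) ^ (ρ s + ρ t)

lemma eulerSum_eq_neg_sum_intervalError (ρ : P → ℕ) {s t : P} (hst : s < t) :
    eulerSum ρ s t = -∑ c ∈ Icc s t, intervalError ρ c t := by
  simp only [intervalError, sum_sub_distrib, IncidenceAlgebra.sum_Icc_mu_left, if_neg hst.ne,
    zero_sub, neg_neg, eulerSum]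

/-- The condition that every interval of length at most `d - 1` is Eulerian; for a poset of rank
`d + 1` this is the property `1`-Sing. -/
def IsOneSing (ρ : P → ℕ) (d : ℕ) : Prop :=
  ∀ s t : P, s ≤ t → ρ t < ρ s + d → intervalError ρ s t = 0

namespace IsOneSing

variable {d : ℕ} {s t : P}

lemma eulerSum_eq_neg_intervalError (hP : IsOneSing ρ d) (hρ : StrictMono ρ) (hst : s < t)
    (hd : ρ t ≤ ρ s + d) : eulerSum ρ s t = -intervalError ρ s t := by
  rw [eulerSum_eq_neg_sum_intervalError ρ hst]
  refine congrArg _ (sum_eq_single_of_mem s (left_mem_Icc.mpr hst.le) fun c hc hcs ↦ ?_)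
  have hsc := hρ ((mem_Icc.mp hc).1.lt_of_ne' hcs)
  exact hP c t (mem_Icc.mp hc).2 (by omega)

lemma eulerSum_eq_zero (hP : IsOneSing ρ d) (hρ : StrictMono ρ) (hst : s < t)
    (hd : ρ t < ρ s + d) : eulerSum ρ s t = 0 := by
  rw [hP.eulerSum_eq_neg_intervalError hρ hst hd.le, hP s t hst.le hd, neg_zero]

end IsOneSing

end EulerSum

section Toric

variable {P : Type*} [PartialOrder P] [LocallyFiniteOrder P] [OrderBot P]
  {R : Type*} [CommRing R] {ρ : P → ℕ} {g : P → R[X]}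

/-- The polynomial `∑_{p < q} g_p (X - 1)^(ρ q - 1 - ρ p)`, which is `ĥ([0̂, q])` when `g` is the
family of toric `g`-polynomials. -/
noncomputable def toricH (ρ : P → ℕ) (g : P → R[X]) (q : P) : R[X] :=
  ∑ p ∈ Iio q, g p * (X - 1) ^ (ρ q - 1 - ρ p)

/-- The polynomial `∑_{p ≤ q} g_p (X - 1)^(ρ q - ρ p)`: the convolution of `g` with the kernel
`(X - 1)^(ρ q - ρ p)` over the closed lower interval of `q`. -/
noncomputable def toricF (ρ : P → ℕ) (g : P → R[X]) (q : P) : R[X] :=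
  ∑ p ∈ Iic q, g p * (X - 1) ^ (ρ q - ρ p)

/-- The failure at `q` of the duality `X^(ρ q) g_q(1/X) = ∑_{p ≤ q} g_p (X - 1)^(ρ q - ρ p)`, which
holds for the toric `g`-polynomials of an Eulerian poset. -/
noncomputable def toricDefect (ρ : P → ℕ) (g : P → R[X]) (q : P) : R[X] :=
  reflect (ρ q) (g q) - toricF ρ g q

lemma toricF_eq (hρ : StrictMono ρ) (g : P → R[X]) (q : P) :
    toricF ρ g q = (X - 1) * toricH ρ g q + g q := by
  classical
  rw [toricF, ← Iio_insert, sum_insert (by simp), Nat.sub_self, pow_zero, mul_one, add_comm,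
    toricH, mul_sum]
  congr 1
  refine sum_congr rfl fun p hp ↦ ?_
  have hpq := hρ (Finset.mem_Iio.mp hp)
  rw [show ρ q - ρ p = ρ q - 1 - ρ p + 1 by omega, pow_succ']
  ring

lemma natDegree_toricH_le (hρ : StrictMono ρ) (hg : ∀ p, (g p).natDegree ≤ ρ p) (q : P) :
    (toricH ρ g q).natDegree ≤ ρ q - 1 := by
  refine natDegree_sum_le_of_forall_le _ _ fun p hp ↦ ?_
  have hpq := hρ (Finset.mem_Iio.mp hp)
  have hdeg := natDegree_mul_le_of_le (hg p) (natDegree_X_sub_one_pow_le (R := R) (ρ q - 1 - ρ p))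
  omega

lemma reflect_toricH_eq_sum (hρ : StrictMono ρ) (hg : ∀ p, (g p).natDegree ≤ ρ p) (q : P) :
    reflect (ρ q - 1) (toricH ρ g q)
      = ∑ p ∈ Iio q, reflect (ρ p) (g p) * (1 - X) ^ (ρ q - 1 - ρ p) := by
  rw [toricH, reflect_finsetSum]
  refine sum_congr rfl fun p hp ↦ ?_
  have hpq := hρ (Finset.mem_Iio.mp hp)
  obtain ⟨k, hk⟩ : ∃ k, ρ q - 1 = ρ p + k := ⟨ρ q - 1 - ρ p, by omega⟩
  rw [hk, Nat.add_sub_cancel_left, reflect_mul _ _ (hg p) (natDegree_X_sub_one_pow_le k),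
    reflect_X_sub_one_pow]

lemma sum_toricF_mul (hρ : StrictMono ρ) (g : P → R[X]) (q : P) :
    ∑ p ∈ Iio q, toricF ρ g p * (1 - X) ^ (ρ q - 1 - ρ p)
      = toricH ρ g q - ∑ r ∈ Iio q, eulerSum ρ r q • (g r * (X - 1) ^ (ρ q - 1 - ρ r)) := by
  have hterm : ∀ p ∈ Iio q, toricF ρ g p * (1 - X) ^ (ρ q - 1 - ρ p)
      = ∑ r ∈ Iic p, (-1 : ℤ) ^ (ρ q - 1 - ρ p) • (g r * (X - 1) ^ (ρ q - 1 - ρ r)) := by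
    intro p hp
    rw [toricF, sum_mul]
    refine sum_congr rfl fun r hr ↦ ?_
    have hpq := hρ (Finset.mem_Iio.mp hp)
    have hrp := hρ.monotone (Finset.mem_Iic.mp hr)
    rw [show ρ q - 1 - ρ r = (ρ p - ρ r) + (ρ q - 1 - ρ p) by omega, pow_add,
      show (1 - X : R[X]) = -1 * (X - 1) by ring, mul_pow, zsmul_eq_mul]
    push_cast
    ring
  rw [sum_congr rfl hterm, Finset.sum_comm' (t' := Iio q) (s' := fun r ↦ Ico r q), toricH,
    ← sum_sub_distrib]
  · refine sum_congr rfl fun r hr ↦ ?_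
    rw [← sum_smul, sum_Ico_neg_one_pow hρ (Finset.mem_Iio.mp hr).le, sub_smul, one_smul]
  · intro p r
    simp only [Finset.mem_Iio, Finset.mem_Iic, Finset.mem_Ico]
    exact ⟨fun ⟨hpq, hrp⟩ ↦ ⟨⟨hrp, hpq⟩, hrp.trans_lt hpq⟩, fun ⟨⟨hrp, hpq⟩, _⟩ ↦ ⟨hpq, hrp⟩⟩

theorem reflect_toricH_sub_toricH (hρ : StrictMono ρ) (hg : ∀ p, (g p).natDegree ≤ ρ p) (q : P) :
    reflect (ρ q - 1) (toricH ρ g q) - toricH ρ g q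
      = ∑ p ∈ Iio q, toricDefect ρ g p * (1 - X) ^ (ρ q - 1 - ρ p)
        - ∑ r ∈ Iio q, eulerSum ρ r q • (g r * (X - 1) ^ (ρ q - 1 - ρ r)) := by
  have hsplit := sum_toricF_mul hρ g q
  simp only [toricDefect, sub_mul, sum_sub_distrib, reflect_toricH_eq_sum hρ hg]
  rw [hsplit]
  ring

/-- `g` is the family of toric `g`-polynomials `ĝ([0̂, q])` of the lower intervals of `P`. -/
structure IsToricG (ρ : P → ℕ) (g : P → R[X]) : Prop where
  apply_bot : g ⊥ = 1
  apply_of_ne_bot : ∀ q, q ≠ ⊥ → g q = toricTrunc (ρ q - 1) (toricH ρ g q)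

namespace IsToricG

lemma natDegree_le (hg : IsToricG ρ g) (p : P) : (g p).natDegree ≤ ρ p := by
  by_cases hp : p = ⊥
  · rw [hp, hg.apply_bot, natDegree_one]
    exact Nat.zero_le _
  · rw [hg.apply_of_ne_bot p hp]
    exact (natDegree_toricTrunc_le _ _).trans (Nat.sub_le _ _)

lemma toricDefect_eq (hg : IsToricG ρ g) (hρ : StrictMono ρ) {q : P} (hq : q ≠ ⊥) :
    toricDefect ρ g q = reflect (ρ q - 1 + 1) (toricTrunc (ρ q - 1) (toricH ρ g q))
      - ((X - 1) * toricH ρ g q + toricTrunc (ρ q - 1) (toricH ρ g q)) := by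
  have hpos := hρ (bot_lt_iff_ne_bot.mpr hq)
  rw [toricDefect, toricF_eq hρ, Nat.sub_add_cancel (by omega), ← hg.apply_of_ne_bot q hq]

lemma coeff_toricDefect_of_lt (hg : IsToricG ρ g) (hρ : StrictMono ρ) {q : P} (hq : q ≠ ⊥)
    {i : ℕ} (hi : ρ q < 2 * i) :
    (toricDefect ρ g q).coeff i
      = ((X - 1) * (reflect (ρ q - 1) (toricH ρ g q) - toricH ρ g q)).coeff i := by
  have hpos := hρ (bot_lt_iff_ne_bot.mpr hq)
  rw [hg.toricDefect_eq hρ hq, coeff_sub, coeff_add, coeff_reflect_toricTrunc_of_lt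
    (natDegree_toricH_le hρ hg.natDegree_le q) (by omega), coeff_toricTrunc, if_neg (by omega),
    add_zero, mul_sub, coeff_sub]

lemma toricDefect_bot (hg : IsToricG ρ g) (hρ_bot : ρ ⊥ = 0) : toricDefect ρ g ⊥ = 0 := by
  simp [toricDefect, toricF, hg.apply_bot, hρ_bot, ← Finset.Icc_bot]

lemma toricDefect_eq_zero (hg : IsToricG ρ g) (hρ : StrictMono ρ) (hρ_bot : ρ ⊥ = 0) {q : P}
    (hq : ∀ r p, r < p → p ≤ q → eulerSum ρ r p = 0) : toricDefect ρ g q = 0 := by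
  induction hn : ρ q using Nat.strong_induction_on generalizing q with
  | _ n ih =>
    by_cases hqb : q = ⊥
    · rw [hqb, hg.toricDefect_bot hρ_bot]
    · have hdeg := natDegree_toricH_le hρ hg.natDegree_le q
      have hsymm : reflect (ρ q - 1) (toricH ρ g q) = toricH ρ g q := by
        rw [← sub_eq_zero, reflect_toricH_sub_toricH hρ hg.natDegree_le, sum_eq_zero, sum_eq_zero,
          sub_zero]
        · intro r hr
          rw [hq r q (Finset.mem_Iio.mp hr) le_rfl, zero_smul]
        · intro p hp
          have hpq := Finset.mem_Iio.mp hp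
          rw [ih (ρ p) (hn ▸ hρ hpq) (fun r p' hr hp' ↦ hq r p' hr (hp'.trans hpq.le)) rfl,
            zero_mul]
      rw [hg.toricDefect_eq hρ hqb, reflect_toricTrunc_of_reflect_eq hdeg hsymm, sub_self]

lemma apply_of_rank_eq_one (hg : IsToricG ρ g) (hρ : StrictMono ρ) (hρ_bot : ρ ⊥ = 0) {s : P}
    (hs : ρ s = 1) : g s = 1 := by
  have hsb : s ≠ ⊥ := by
    rintro rfl
    omega
  have hIio : Iio s = {⊥} := by
    ext p
    rw [Finset.mem_Iio, Finset.mem_singleton]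
    refine ⟨fun hps ↦ ?_, fun hp ↦ hp ▸ bot_lt_iff_ne_bot.mpr hsb⟩
    by_contra hpb
    have := hρ hps
    have := hρ (bot_lt_iff_ne_bot.mpr hpb)
    omega
  have hH : toricH ρ g s = 1 := by
    rw [toricH, hIio, Finset.sum_singleton, hg.apply_bot, hs, hρ_bot]
    simp
  rw [hg.apply_of_ne_bot s hsb, hH, hs]
  simp [toricTrunc]

end IsToricG

end Toric

section OneSing

variable {P : Type*} [PartialOrder P] [LocallyFiniteOrder P] [DecidableEq P]
  {R : Type*} [CommRing R] {ρ : P → ℕ} {g : P → R[X]} {d : ℕ}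

namespace IsOneSing

section LowerIntervals

variable [OrderBot P]

lemma toricDefect_eq_zero (hP : IsOneSing ρ d) (hg : IsToricG ρ g) (hρ : StrictMono ρ)
    (hρ_bot : ρ ⊥ = 0) {p : P} (hp : ρ p < d) : toricDefect ρ g p = 0 := by
  refine hg.toricDefect_eq_zero hρ hρ_bot fun r q hrq hqp ↦ hP.eulerSum_eq_zero hρ hrq ?_
  have := hρ.monotone hqp
  omega

lemma reflect_toricH_sub_toricH_of_rank_eq (hP : IsOneSing ρ d) (hg : IsToricG ρ g)
    (hρ : StrictMono ρ) (hρ_bot : ρ ⊥ = 0) {t : P} (htb : t ≠ ⊥) (ht : ρ t = d) :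
    reflect (ρ t - 1) (toricH ρ g t) - toricH ρ g t
      = intervalError ρ ⊥ t • (X - 1) ^ (d - 1) := by
  have hbt := bot_lt_iff_ne_bot.mpr htb
  rw [reflect_toricH_sub_toricH hρ hg.natDegree_le, sum_eq_zero,
    sum_eq_single_of_mem ⊥ (Finset.mem_Iio.mpr hbt),
    hP.eulerSum_eq_neg_intervalError hρ hbt (by omega), hg.apply_bot, hρ_bot, ht]
  · simp
  · intro r hr hrb
    have := hρ (bot_lt_iff_ne_bot.mpr hrb)
    rw [hP.eulerSum_eq_zero hρ (Finset.mem_Iio.mp hr) (by omega), zero_smul]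
  · intro p hp
    rw [hP.toricDefect_eq_zero hg hρ hρ_bot (ht ▸ hρ (Finset.mem_Iio.mp hp)), zero_mul]

lemma coeff_toricDefect_of_rank_eq (hP : IsOneSing ρ d) (hg : IsToricG ρ g) (hρ : StrictMono ρ)
    (hρ_bot : ρ ⊥ = 0) {t : P} (htb : t ≠ ⊥) (ht : ρ t = d) {i : ℕ} (hi : d < 2 * i) :
    (toricDefect ρ g t).coeff i = intervalError ρ ⊥ t • ((X - 1 : R[X]) ^ d).coeff i := by
  have hpos := hρ (bot_lt_iff_ne_bot.mpr htb)
  rw [hg.coeff_toricDefect_of_lt hρ htb (ht ▸ hi),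
    hP.reflect_toricH_sub_toricH_of_rank_eq hg hρ hρ_bot htb ht, mul_smul_comm,
    mul_pow_sub_one (by omega), coeff_smul]

end LowerIntervals

section Top

variable [Fintype P] [BoundedOrder P]

lemma eulerSum_bot_top (hP : IsOneSing ρ d) (hρ : StrictMono ρ) (hρ_bot : ρ ⊥ = 0)
    (hρ_top : ρ ⊤ = d + 1) :
    eulerSum ρ ⊥ ⊤
      = -(intervalError ρ ⊥ ⊤ + ∑ s with ρ s = 1, intervalError ρ s ⊤) := by
  have hbt : (⊥ : P) < ⊤ := bot_lt_iff_ne_bot.mpr fun h ↦ by rw [h] at hρ_top; omega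
  rw [eulerSum_eq_neg_sum_intervalError ρ hbt, Finset.Icc_bot_top,
    sum_eq_add_sum_of_subset (mem_univ ⊥) (filter_subset (ρ · = 1) univ) (by simp [hρ_bot])]
  intro s _ hsb hs
  have := hρ (bot_lt_iff_ne_bot.mpr hsb)
  have : ρ s ≠ 1 := by simpa using hs
  exact hP s ⊤ le_top (by omega)

lemma sum_Iio_top_eulerSum_smul (hP : IsOneSing ρ d) (hg : IsToricG ρ g) (hρ : StrictMono ρ)
    (hρ_bot : ρ ⊥ = 0) (hρ_top : ρ ⊤ = d + 1) (hd : 0 < d) :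
    ∑ r ∈ Iio ⊤, eulerSum ρ r ⊤ • (g r * (X - 1) ^ (d - ρ r))
      = -((intervalError ρ ⊥ ⊤ + ∑ s with ρ s = 1, intervalError ρ s ⊤) • (X - 1) ^ d
        + (∑ s with ρ s = 1, intervalError ρ s ⊤) • (X - 1) ^ (d - 1)) := by
  have lt_top : ∀ {s : P}, ρ s ≤ d → s < ⊤ := fun {s} hs ↦
    lt_top_iff_ne_top.mpr fun h ↦ by rw [h] at hs; omega
  rw [sum_eq_add_sum_of_subset (a := ⊥) (t := univ.filter (ρ · = 1)), hP.eulerSum_bot_top hρ hρ_bot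
    hρ_top, hg.apply_bot, hρ_bot, one_mul, Nat.sub_zero, neg_smul, neg_add,
    sum_smul (s := filter _ _), ← sum_neg_distrib]
  · congr 1
    refine sum_congr rfl fun s hs ↦ ?_
    have hs1 : ρ s = 1 := by simpa using hs
    rw [hP.eulerSum_eq_neg_intervalError hρ (lt_top (by omega)) (by omega),
      hg.apply_of_rank_eq_one hρ hρ_bot hs1, hs1, one_mul, neg_smul]
  · exact Finset.mem_Iio.mpr (lt_top (by omega))
  · intro s hs
    have hs1 : ρ s = 1 := by simpa using hs
    exact Finset.mem_Iio.mpr (lt_top (by omega))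
  · simp [hρ_bot]
  · intro r hr hrb hr1
    have := hρ (bot_lt_iff_ne_bot.mpr hrb)
    have : ρ r ≠ 1 := by simpa using hr1
    rw [hP.eulerSum_eq_zero hρ (Finset.mem_Iio.mp hr) (by omega), zero_smul]

lemma sum_Iio_top_toricDefect_mul (hP : IsOneSing ρ d) (hg : IsToricG ρ g) (hρ : StrictMono ρ)
    (hρ_bot : ρ ⊥ = 0) (hρ_top : ρ ⊤ = d + 1) :
    ∑ p ∈ Iio ⊤, toricDefect ρ g p * (1 - X) ^ (d - ρ p)
      = ∑ t with ρ t = d, toricDefect ρ g t := by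
  refine (sum_subset_zero_on_sdiff (fun t ht ↦ ?_) (fun p hp ↦ ?_) fun t ht ↦ ?_).symm
  · refine Finset.mem_Iio.mpr (lt_top_iff_ne_top.mpr ?_)
    rintro rfl
    simp [hρ_top] at ht
  · obtain ⟨hp_top, hpd⟩ : p < ⊤ ∧ ρ p ≠ d := by simpa using hp
    have := hρ hp_top
    rw [hP.toricDefect_eq_zero hg hρ hρ_bot (by omega), zero_mul]
  · have htd : ρ t = d := by simpa using ht
    rw [htd, Nat.sub_self, pow_zero, mul_one]

theorem coeff_reflect_toricH_top_sub (hP : IsOneSing ρ d) (hg : IsToricG ρ g) (hρ : StrictMono ρ)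
    (hρ_bot : ρ ⊥ = 0) (hρ_top : ρ ⊤ = d + 1) {i : ℕ} (hd : 0 < d) (hi : d < 2 * i) :
    (reflect d (toricH ρ g ⊤) - toricH ρ g ⊤).coeff i
      = (intervalError ρ ⊥ ⊤ + ∑ t with ρ t = d, intervalError ρ ⊥ t)
          • ((X - 1 : R[X]) ^ d).coeff i
        + (∑ s with ρ s = 1, intervalError ρ s ⊤)
          • (X * (X - 1 : R[X]) ^ (d - 1)).coeff i := by
  have hdefect : ∀ t ∈ univ.filter (ρ · = d), (toricDefect ρ g t).coeff i
      = intervalError ρ ⊥ t • ((X - 1 : R[X]) ^ d).coeff i := by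
    intro t ht
    have htd : ρ t = d := by simpa using ht
    refine hP.coeff_toricDefect_of_rank_eq hg hρ hρ_bot ?_ htd hi
    rintro rfl
    omega
  have hX : (X * (X - 1) ^ (d - 1) : R[X]) = (X - 1) ^ d + (X - 1) ^ (d - 1) := by
    rw [← mul_pow_sub_one hd.ne' (X - 1 : R[X])]
    ring
  have hdiff := reflect_toricH_sub_toricH hρ hg.natDegree_le (⊤ : P)
  rw [hρ_top, Nat.add_sub_cancel, hP.sum_Iio_top_eulerSum_smul hg hρ hρ_bot hρ_top hd,
    hP.sum_Iio_top_toricDefect_mul hg hρ hρ_bot hρ_top] at hdiff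
  rw [hdiff, hX, coeff_sub, finsetSum_coeff, sum_congr rfl hdefect, ← sum_smul]
  simp only [coeff_neg, coeff_add, coeff_smul]
  module

theorem toric_dehn_sommerville (hP : IsOneSing ρ d) (hg : IsToricG ρ g) (hρ : StrictMono ρ)
    (hρ_bot : ρ ⊥ = 0) (hρ_top : ρ ⊤ = d + 1) {i : ℕ} (hi : d < 2 * i) (hid : i ≤ d) :
    (toricH ρ g ⊤).coeff i - (toricH ρ g ⊤).coeff (d - i)
      = (-1) ^ (d - i + 1) *
          ((d.choose i : R) * (intervalError ρ ⊥ ⊤ : ℤ)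
            + d.choose i * (∑ t with ρ t = d, intervalError ρ ⊥ t : ℤ)
            + (d - 1).choose (i - 1) * (∑ s with ρ s = 1, intervalError ρ s ⊤ : ℤ)) := by
  have hcoeff := hP.coeff_reflect_toricH_top_sub hg hρ hρ_bot hρ_top (by omega) hi
  obtain ⟨j, rfl⟩ : ∃ j, i = j + 1 := ⟨i - 1, by omega⟩
  rw [coeff_sub, coeff_reflect, revAt_le hid, coeff_X_mul, coeff_X_sub_one_pow,
    coeff_X_sub_one_pow, show d - 1 - j = d - (j + 1) by omega] at hcoeff
  simp only [zsmul_eq_mul, Int.cast_add] at hcoeff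
  rw [Nat.add_sub_cancel, pow_succ]
  linear_combination -hcoeff

end Top

end IsOneSing

end OneSing

section Comparison

variable {P : Type*} [Fintype P] [PartialOrder P] [LocallyFiniteOrder P]

lemma IsMobius.eq_mu [DecidableEq P] [DecidableLE P] {mu : P → P → ℤ} (hmu : IsMobius mu) {s t : P}
    (hst : s ≤ t) : mu s t = IncidenceAlgebra.mu ℤ s t := by
  induction t using WellFoundedLT.induction with
  | _ t ih =>
    rcases hst.eq_or_lt with rfl | hlt
    · rw [hmu.1, IncidenceAlgebra.mu_self]
    · have hsum := hmu.2 s t hlt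
      rw [show univ.filter (fun c ↦ s ≤ c ∧ c ≤ t) = Icc s t by ext; simp, ← Ico_insert_right hst,
        sum_insert right_notMem_Ico] at hsum
      rw [IncidenceAlgebra.mu_eq_neg_sum_Ico_of_ne hlt.ne, eq_neg_of_add_eq_zero_left hsum]
      exact congrArg _ (sum_congr rfl fun c hc ↦ ih c (mem_Ico.mp hc).2 (mem_Ico.mp hc).1)

namespace ToricPair

variable [BoundedOrder P] [DecidableLT P] {ρ : P → ℕ} {hh g : P → ℤ[X]}

lemma apply_eq_toricH (ht : ToricPair ρ hh g) {q : P} (hq : q ≠ ⊥) : hh q = toricH ρ g q := by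
  rw [ht.2.2.1 q hq, toricH, filter_gt_eq_Iio]

lemma isToricG (ht : ToricPair ρ hh g) : IsToricG ρ g where
  apply_bot := ht.2.1
  apply_of_ne_bot q hq := by
    obtain ⟨hzero, hlow, hhigh⟩ := ht.2.2.2 q hq
    rw [← ht.apply_eq_toricH hq]
    ext k
    rw [coeff_toricTrunc, sub_mul, one_mul, coeff_sub]
    split_ifs with hk
    · rcases k with _ | k
      · rw [hzero, coeff_X_mul_zero, sub_zero]
      · rw [hlow _ (by omega) (by omega), coeff_X_mul, Nat.add_sub_cancel]
    · exact hhigh k (by omega)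

end ToricPair

end Comparison

theorem one_sing_toric_dehn_sommerville_general {P : Type*} [Fintype P] [PartialOrder P]
    [BoundedOrder P] [DecidableLE P] [DecidableLT P] (d : ℕ) (ρ : P → ℕ)
    (mu : P → P → ℤ) (hh g : P → Polynomial ℤ) (hρ : StrictMono ρ) (hρ_bot : ρ ⊥ = 0)
    (hρ_top : ρ ⊤ = d + 1)
    (hmu : IsMobius mu) (htoric : ToricPair ρ hh g)
    (hsing : ∀ s t : P, s ≤ t → ρ t - ρ s + 1 ≤ d → mu s t = (-1 : ℤ) ^ (ρ t - ρ s))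
    (i : ℕ) (hi : d / 2 < i) (hid : i ≤ d) :
    (hh ⊤).coeff i - (hh ⊤).coeff (d - i)
      = (-1 : ℤ) ^ (d - i + 1) *
          ((d.choose i : ℤ) * (mu ⊥ ⊤ - (-1 : ℤ) ^ (d + 1))
            + (d.choose i : ℤ) * ∑ t ∈ Finset.univ.filter (fun t : P => ρ t = d),
                (mu ⊥ t - (-1 : ℤ) ^ d)
            + ((d - 1).choose (i - 1) : ℤ) * ∑ s ∈ Finset.univ.filter (fun s : P => ρ s = 1),
                (mu s ⊤ - (-1 : ℤ) ^ d)) := by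
  classical
  let : LocallyFiniteOrder P := Fintype.toLocallyFiniteOrder
  have htop : (⊤ : P) ≠ ⊥ := fun h ↦ by rw [h] at hρ_top; omega
  have herror : ∀ {s t : P} {n : ℕ}, s ≤ t → ρ t = ρ s + n →
      mu s t - (-1) ^ n = intervalError ρ s t := by
    intro s t n hst hn
    rw [hmu.eq_mu hst, intervalError, neg_one_pow_congr (by grind : Even n ↔ Even (ρ s + ρ t))]
  have hone : IsOneSing ρ d := fun s t hst hd ↦ by
    have := hρ.monotone hst
    rw [← herror hst (n := ρ t - ρ s) (by omega), hsing s t hst (by omega), sub_self]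
  have hcoatoms : ∀ t ∈ univ.filter (fun t : P ↦ ρ t = d),
      mu ⊥ t - (-1) ^ d = intervalError ρ ⊥ t := fun t ht ↦
    herror bot_le (by simpa [hρ_bot] using ht)
  have hatoms : ∀ s ∈ univ.filter (fun s : P ↦ ρ s = 1),
      mu s ⊤ - (-1) ^ d = intervalError ρ s ⊤ := fun s hs ↦
    herror le_top (by rw [hρ_top, (mem_filter.mp hs).2, add_comm])
  rw [htoric.apply_eq_toricH htop, herror bot_le (by omega), sum_congr rfl hcoatoms,
    sum_congr rfl hatoms]
  exact hone.toric_dehn_sommerville htoric.isToricG hρ hρ_bot hρ_top (by omega) hid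

/-- toric Dehn–Sommerville for 1-Sing posets: for `i > ⌊d/2⌋`,
`ĥ_{d-i} - ĥ_i = (-1)^{d-i+1}[ C(d,i) e(0̂,1̂) + C(d,i) ∑_{ρ(t)=d} e(0̂,t)
 + C(d-1,i-1) ∑_{ρ(s)=1} e(s,1̂) ]` (here `ĥ_i = coeff of x^{d-i}` in `ĥ(P,x)`, and
the interval errors are `e(0̂,t) = μ(0̂,t) - (-1)^d`, `e(s,1̂) = μ(s,1̂) - (-1)^d`). -/
theorem one_sing_toric_dehn_sommerville (d : ℕ) (ρ : α → ℕ) (mu : α → α → ℤ)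
    (hh g : α → Polynomial ℤ)
    (hgr : IsGraded ρ d) (hmu : IsMobius mu) (htoric : ToricPair ρ hh g)
    (hsing : ∀ s t : α, s ≤ t → ρ t - ρ s + 1 ≤ d → mu s t = (-1 : ℤ) ^ (ρ t - ρ s))
    (i : ℕ) (hi : d / 2 < i) (hid : i ≤ d) :
    (hh ⊤).coeff i - (hh ⊤).coeff (d - i)
      = (-1 : ℤ) ^ (d - i + 1) *
          ((d.choose i : ℤ) * (mu ⊥ ⊤ - (-1 : ℤ) ^ (d + 1))
            + (d.choose i : ℤ) * ∑ t ∈ Finset.univ.filter (fun t : α => ρ t = d),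
                (mu ⊥ t - (-1 : ℤ) ^ d)
            + ((d - 1).choose (i - 1) : ℤ) * ∑ s ∈ Finset.univ.filter (fun s : α => ρ s = 1),
                (mu s ⊤ - (-1 : ℤ) ^ d)) := by
  exact one_sing_toric_dehn_sommerville_general d ρ mu hh g hgr.2.2.2 hgr.1 hgr.2.1 hmu htoric
    hsing i hi hid
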